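/- Let N ∈ ℕ₊, δ > 0, m > 0. A permanent fault of normalized magnitude m is guaranteed detectable by some MA-TCC window length, i.e., there exists W ∈ ℕ₊ with m > 2δ√((N+W)/(W(N+1))), if and only if (1/N)·(((N+1)/(4δ²)) m² − 1) > 0, i.e., m > 2δ/√(N+1). -/

import Mathlib

/-!
The magnitude needed for detection with window length `W` factors as
`2δ/√(N+1) · √(1 + N/W)`. It decreases in `W` to `2δ/√(N+1)`, which is therefore the greatest lower
bound over all windows, and `m` exceeds some member of a family exactly when it exceeds its
greatest lower bound. Squaring `2δ/√(N+1) < m` gives the polynomial form of the criterion.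
-/

open Filter Set Topology

/-- The normalized magnitude above which a fault is guaranteed detectable by the MA-TCC with
window length `w`, for training sample size `n` and square root `δ` of the single-observation
control limit. Sizes are real so that the dependence on `w` can be studied by calculus; for `w = 0`
the division gives the junk value `0`. -/
noncomputable def detectionThreshold (n δ w : ℝ) : ℝ :=
  2 * δ * √((n + w) / (w * (n + 1)))

section

variable {n δ : ℝ}

lemma detectionThreshold_eq_mul_sqrt {w : ℝ} (hn : 0 ≤ n) (hw : w ≠ 0) :
    detectionThreshold n δ w = 2 * δ / √(n + 1) * √(1 + n / w) := by
  have hratio : (n + w) / (w * (n + 1)) = (1 + n / w) / (n + 1) := by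
    field_simp
    ring
  rw [detectionThreshold, hratio, Real.sqrt_div' _ (by positivity)]
  ring

lemma antitoneOn_detectionThreshold (hn : 0 ≤ n) (hδ : 0 ≤ δ) :
    AntitoneOn (detectionThreshold n δ) (Ioi 0) := by
  intro v hv w hw hvw
  rw [mem_Ioi] at hv hw
  rw [detectionThreshold_eq_mul_sqrt hn hv.ne', detectionThreshold_eq_mul_sqrt hn hw.ne']
  gcongr

lemma tendsto_detectionThreshold_atTop (hn : 0 ≤ n) :
    Tendsto (detectionThreshold n δ) atTop (𝓝 (2 * δ / √(n + 1))) := by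
  have hlim : Tendsto (fun w : ℝ => 2 * δ / √(n + 1) * √(1 + n / w)) atTop
      (𝓝 (2 * δ / √(n + 1) * √(1 + 0))) :=
    ((tendsto_const_nhds.div_atTop tendsto_id).const_add 1).sqrt.const_mul _
  rw [add_zero, Real.sqrt_one, mul_one] at hlim
  refine hlim.congr' ?_
  filter_upwards [eventually_ne_atTop 0] with w hw
  exact (detectionThreshold_eq_mul_sqrt hn hw).symm

lemma isGLB_range_detectionThreshold (hn : 0 ≤ n) (hδ : 0 ≤ δ) :
    IsGLB (range fun W : ℕ+ => detectionThreshold n δ W) (2 * δ / √(n + 1)) := by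
  have hanti : Antitone fun W : ℕ+ => detectionThreshold n δ W := fun V W hVW =>
    antitoneOn_detectionThreshold hn hδ (mem_Ioi.2 (Nat.cast_pos.2 V.pos))
      (mem_Ioi.2 (Nat.cast_pos.2 W.pos)) (Nat.cast_le.2 hVW)
  have hcast : Tendsto (fun W : ℕ+ => (W : ℝ)) atTop atTop :=
    tendsto_natCast_atTop_atTop.comp tendsto_PNat_val_atTop_atTop
  exact isGLB_of_tendsto_atTop hanti ((tendsto_detectionThreshold_atTop hn).comp hcast)

lemma exists_detectionThreshold_lt_iff {m : ℝ} (hn : 0 ≤ n) (hδ : 0 ≤ δ) :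
    (∃ W : ℕ+, detectionThreshold n δ W < m) ↔ 2 * δ / √(n + 1) < m := by
  rw [isGLB_lt_iff (isGLB_range_detectionThreshold hn hδ), exists_range_iff]

lemma magnitude_criterion_pos_iff {m : ℝ} (hn : 0 < n) (hδ : 0 < δ) (hm : 0 ≤ m) :
    0 < 1 / n * ((n + 1) / (4 * δ ^ 2) * m ^ 2 - 1) ↔ 2 * δ / √(n + 1) < m := by
  have hsq : (2 * δ / √(n + 1)) ^ 2 = 4 * δ ^ 2 / (n + 1) := by
    rw [div_pow, Real.sq_sqrt (by positivity), mul_pow]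
    norm_num
  calc 0 < 1 / n * ((n + 1) / (4 * δ ^ 2) * m ^ 2 - 1)
      ↔ 1 < (n + 1) / (4 * δ ^ 2) * m ^ 2 := by
        rw [mul_pos_iff_of_pos_left (by positivity), sub_pos]
    _ ↔ 4 * δ ^ 2 / (n + 1) < m ^ 2 := by
        rw [div_mul_eq_mul_div, one_lt_div (by positivity), div_lt_iff₀' (by positivity)]
    _ ↔ 2 * δ / √(n + 1) < m := by
        rw [← hsq, pow_lt_pow_iff_left₀ (by positivity) hm two_ne_zero]

theorem pf_detectability_general {m : ℝ} (hn : 0 < n) (hδ : 0 < δ) (hm : 0 ≤ m) :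
    ((∃ W : ℕ+, m > 2 * δ * √((n + W) / (W * (n + 1)))) ↔
      1 / n * ((n + 1) / (4 * δ ^ 2) * m ^ 2 - 1) > 0) ∧
    (1 / n * ((n + 1) / (4 * δ ^ 2) * m ^ 2 - 1) > 0 ↔ m > 2 * δ / √(n + 1)) :=
  have hcriterion := magnitude_criterion_pos_iff hn hδ hm
  ⟨(exists_detectionThreshold_lt_iff hn.le hδ.le).trans hcriterion.symm, hcriterion⟩

end

/-- Corollary 2: a PF of normalized magnitude m is guaranteed detectable
by some window length iff (1/N)(((N+1)/(4δ²))m² − 1) > 0, i.e. iff m > 2δ/√(N+1). -/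
theorem pf_detectability
    (N : ℕ+) (δ m : ℝ) (hδ : 0 < δ) (hm : 0 < m) :
    ((∃ W : ℕ+,
        m > 2 * δ * Real.sqrt (((N : ℝ) + (W : ℝ)) / ((W : ℝ) * ((N : ℝ) + 1)))) ↔
      (1 / (N : ℝ)) * (((N : ℝ) + 1) / (4 * δ ^ 2) * m ^ 2 - 1) > 0) ∧
    ((1 / (N : ℝ)) * (((N : ℝ) + 1) / (4 * δ ^ 2) * m ^ 2 - 1) > 0 ↔
      m > 2 * δ / Real.sqrt ((N : ℝ) + 1)) :=
  pf_detectability_general (Nat.cast_pos.2 N.pos) hδ hm.le
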